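/- Let B be a supersoluble brace such that B/ζ_n(B) is finite for some n ∈ ℕ. Then the (n+1)-th term Γ_{n+1}(B) of the lower central series of B is finite. -/

import Mathlib

/-- A (skew left) brace: a set with an additive group structure (not necessarily abelian)
and a multiplicative group structure sharing the same identity, satisfying the skew
distributive law `a * (b + c) = a * b + -a + a * c`. -/
class SkewBrace (B : Type*) extends AddGroup B, Group B where
  one_eq_zero : (1 : B) = (0 : B)
  skew_distrib : ∀ a b c : B, a * (b + c) = a * b + -a + a * c

/-- A group is supersoluble if it has a finite chain of normal subgroups with all
factors cyclic. -/
def Group.IsSupersoluble (G : Type*) [Group G] : Prop :=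
  ∃ (n : ℕ) (H : ℕ → Subgroup G),
    H 0 = ⊥ ∧ H n = ⊤ ∧ (∀ i, (H i).Normal) ∧ (∀ i, i < n → H i ≤ H (i + 1)) ∧
    ∀ i, i < n → ∃ x ∈ H (i + 1), ∀ y ∈ H (i + 1), ∃ k : ℤ, (x ^ k)⁻¹ * y ∈ H i

namespace SkewBrace

variable {B : Type*} [SkewBrace B]

/-- `lam a b = -a + a * b`, i.e. `λ_a(b)`. -/
def lam (a b : B) : B := -a + a * b

/-- the star operation `a ∗ b = λ_a(b) - b`. -/
def starOp (a b : B) : B := lam a b + -b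

/-- the additive commutator `[a,b]_+`. -/
def addCommutator (a b : B) : B := -a + -b + a + b

/-- A subbrace of `B`: a subset that is a subgroup of both `(B,+)` and `(B,·)`. -/
structure Subbrace (B : Type*) [SkewBrace B] where
  carrier : Set B
  zero_mem : (0 : B) ∈ carrier
  add_mem : ∀ {a b : B}, a ∈ carrier → b ∈ carrier → a + b ∈ carrier
  neg_mem : ∀ {a : B}, a ∈ carrier → -a ∈ carrier
  mul_mem : ∀ {a b : B}, a ∈ carrier → b ∈ carrier → a * b ∈ carrier
  inv_mem : ∀ {a : B}, a ∈ carrier → a⁻¹ ∈ carrier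

/-- An ideal of `B`: a subbrace that is normal in `(B,+)` and in `(B,·)` and is
invariant under all the maps `λ_b`. -/
structure BraceIdeal (B : Type*) [SkewBrace B] extends Subbrace B where
  addConj_mem : ∀ (b : B) {a : B}, a ∈ carrier → b + a + -b ∈ carrier
  mulConj_mem : ∀ (b : B) {a : B}, a ∈ carrier → b * a * b⁻¹ ∈ carrier
  lam_mem : ∀ (b : B) {a : B}, a ∈ carrier → lam b a ∈ carrier

/-- The additive subgroup underlying a subbrace. -/
def Subbrace.addSubgroup (S : Subbrace B) : AddSubgroup B where
  carrier := S.carrier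
  zero_mem' := S.zero_mem
  add_mem' := S.add_mem
  neg_mem' := S.neg_mem

/-- The multiplicative subgroup underlying a subbrace. -/
def Subbrace.subgroup (S : Subbrace B) : Subgroup B where
  carrier := S.carrier
  one_mem' := by rw [one_eq_zero]; exact S.zero_mem
  mul_mem' := S.mul_mem
  inv_mem' := S.inv_mem

/-- Given ideals `J ≤ I` of `B`, `MemSocQuotRel I J x` says that the coset of `x`
lies in `Soc(I/J) = Ker(λ) ∩ Z(I/J, +)` (for `I = B` take `I = Set.univ`). -/
def MemSocQuotRel (I J : Set B) (x : B) : Prop :=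
  x ∈ I ∧ (∀ y ∈ I, -y + lam x y ∈ J) ∧ ∀ y ∈ I, -(y + x) + (x + y) ∈ J

/-- Given ideals `J ≤ I` of `B`, `MemZetaQuotRel I J x` says that the coset of `x`
lies in `ζ(I/J) = Soc(I/J) ∩ Z(I/J, ·)`. -/
def MemZetaQuotRel (I J : Set B) (x : B) : Prop :=
  MemSocQuotRel I J x ∧ ∀ y ∈ I, (y * x)⁻¹ * (x * y) ∈ J

/-- The coset of `x` lies in `Soc(B/J)`. -/
def MemSocQuot (J : Set B) (x : B) : Prop := MemSocQuotRel Set.univ J x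

/-- The coset of `x` lies in `ζ(B/J)`. -/
def MemZetaQuot (J : Set B) (x : B) : Prop := MemZetaQuotRel Set.univ J x

/-- For ideals `I ≤ J`, the additive group of the quotient `J/I` is infinite cyclic. -/
def QuotAddInfCyclic (I J : Set B) : Prop :=
  ∃ x ∈ J, (∀ y ∈ J, ∃ n : ℤ, -(n • x) + y ∈ I) ∧ ∀ n : ℤ, n • x ∈ I → n = 0

/-- For ideals `I ≤ J`, the quotient `J/I` has prime order `p`. -/
def QuotPrimeOrder (I J : Set B) (p : ℕ) : Prop :=
  p.Prime ∧ ∃ x ∈ J, x ∉ I ∧ p • x ∈ I ∧ ∀ y ∈ J, ∃ n : ℤ, -(n • x) + y ∈ I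

/-- A brace is supersoluble if it has a finite chain of ideals each factor of which
either is additively infinite cyclic and contained in the socle of the corresponding
quotient, or has prime order. -/
def IsSupersoluble (B : Type*) [SkewBrace B] : Prop :=
  ∃ (n : ℕ) (I : ℕ → BraceIdeal B),
    (I 0).carrier = {0} ∧ (I n).carrier = Set.univ ∧
    (∀ i, i < n → (I i).carrier ⊆ (I (i + 1)).carrier) ∧
    ∀ i, i < n →
      (QuotAddInfCyclic (I i).carrier (I (i + 1)).carrier ∧
        ∀ x ∈ (I (i + 1)).carrier, MemSocQuot (I i).carrier x) ∨
      ∃ p : ℕ, QuotPrimeOrder (I i).carrier (I (i + 1)).carrier p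

/-- The upper socle series of the brace (carrier of the ideal) `I`. -/
def socChainRel (I : Set B) : ℕ → Set B
  | 0 => {0}
  | n + 1 => {x | MemSocQuotRel I (socChainRel I n) x}

/-- The upper central series of the brace (carrier of the ideal) `I`. -/
def zetaChainRel (I : Set B) : ℕ → Set B
  | 0 => {0}
  | n + 1 => {x | MemZetaQuotRel I (zetaChainRel I n) x}

/-- The upper socle series `Soc_n(B)` of `B`. -/
def socChain (B : Type*) [SkewBrace B] : ℕ → Set B := socChainRel Set.univ

/-- The upper central series `ζ_n(B)` of `B`. -/
def zetaChain (B : Type*) [SkewBrace B] : ℕ → Set B := zetaChainRel Set.univ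

/-- A brace is centrally nilpotent if its upper central series reaches `B`. -/
def IsCentrallyNilpotent (B : Type*) [SkewBrace B] : Prop :=
  ∃ m : ℕ, zetaChain B m = Set.univ

end SkewBrace

namespace SkewBrace

/-- The lower central series of `B`, indexed so that `gammaChain B n = Γ_{n+1}(B)`:
`gammaChain B 0 = Γ_1(B) = B` and `Γ_{n+2}(B)` is the additive subgroup generated by
`Γ_{n+1}(B) ∗ B`, `B ∗ Γ_{n+1}(B)` and `[Γ_{n+1}(B), B]_+`. -/
def gammaChain (B : Type*) [SkewBrace B] : ℕ → Set B
  | 0 => Set.univ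
  | n + 1 => ↑(AddSubgroup.closure
      {z : B | (∃ x ∈ gammaChain B n, ∃ b : B, z = starOp x b) ∨
        (∃ b : B, ∃ x ∈ gammaChain B n, z = starOp b x) ∨
        ∃ x ∈ gammaChain B n, ∃ b : B, z = addCommutator x b})

end SkewBrace
namespace SkewBrace
section basics
variable {B : Type*} [SkewBrace B]

theorem mul_eq (a b : B) : a * b = a + lam a b := by simp [lam]

theorem lam_add (a b c : B) : lam a (b + c) = lam a b + lam a c := by
  simp [lam, skew_distrib, add_assoc]

theorem lam_one (b : B) : lam 1 b = b := by simp [lam, one_eq_zero]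

theorem lam_z (a : B) : lam a 0 = 0 := by
  simp [lam, ← one_eq_zero (B := B)]

theorem lam_neg (a b : B) : lam a (-b) = - lam a b := by
  rw [eq_neg_iff_add_eq_zero, ← lam_add]; simp [lam_z]

theorem lam_mul (a b c : B) : lam (a * b) c = lam a (lam b c) := by
  rw [lam.eq_1 b c, lam_add, lam_neg]
  simp [lam, mul_assoc, add_assoc]

theorem lam_inv_lam (a b : B) : lam a⁻¹ (lam a b) = b := by
  rw [← lam_mul]; simp [lam_one]

theorem lam_lam_inv (a b : B) : lam a (lam a⁻¹ b) = b := by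
  rw [← lam_mul]; simp [lam_one]

/-- `lam a` as an additive homomorphism. -/
def lamHom (a : B) : B →+ B where
  toFun := lam a
  map_zero' := lam_z a
  map_add' := lam_add a

theorem lam_nsmul (a : B) (n : ℕ) (b : B) : lam a (n • b) = n • lam a b :=
  map_nsmul (lamHom a) n b

theorem lam_zsmul (a : B) (n : ℤ) (b : B) : lam a (n • b) = n • lam a b :=
  map_zsmul (lamHom a) n b

theorem neg_add_eq_lam (a b : B) : -a + b = lam a (a⁻¹ * b) := by simp [lam]

theorem inv_mul_eq_lam (a b : B) : a⁻¹ * b = lam a⁻¹ (-a + b) := by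
  rw [neg_add_eq_lam, lam_inv_lam]

theorem inv_eq_lam (a : B) : a⁻¹ = - lam a⁻¹ a := by
  rw [eq_neg_iff_add_eq_zero, ← mul_eq]; simp [one_eq_zero]

/-- Build an ideal from an additive subgroup. -/
def mkIdeal (S : AddSubgroup B) (h1 : ∀ (b : B) {a : B}, a ∈ S → b + a + -b ∈ S)
    (h2 : ∀ (b : B) {a : B}, a ∈ S → b * a * b⁻¹ ∈ S)
    (h3 : ∀ (b : B) {a : B}, a ∈ S → lam b a ∈ S) : BraceIdeal B where
  carrier := S
  zero_mem := S.zero_mem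
  add_mem := S.add_mem
  neg_mem := S.neg_mem
  mul_mem := by
    intro a b ha hb
    rw [mul_eq]
    exact S.add_mem ha (h3 a hb)
  inv_mem := by
    intro a ha
    rw [inv_eq_lam]
    exact S.neg_mem (h3 _ ha)
  addConj_mem := h1
  mulConj_mem := h2
  lam_mem := h3

/-- additive congruence of an ideal -/
def BraceIdeal.addCon (I : BraceIdeal B) : AddCon B where
  r a b := -a + b ∈ I.carrier
  iseqv := 
    { refl := fun a => by simpa using I.zero_mem
      symm := fun {a b} h => by simpa using I.neg_mem h
      trans := fun {a b c} h h' => by simpa [add_assoc] using I.add_mem h h' }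
  add' := by
    intro a b c d h h'
    have := I.add_mem (I.addConj_mem (-c) h) h'
    simpa [add_assoc] using this

theorem BraceIdeal.rel_iff (I : BraceIdeal B) (a b : B) :
    -a + b ∈ I.carrier ↔ a⁻¹ * b ∈ I.carrier := by
  constructor
  · intro h
    rw [inv_mul_eq_lam]; exact I.lam_mem _ h
  · intro h
    rw [neg_add_eq_lam]; exact I.lam_mem _ h

/-- multiplicative congruence of an ideal -/
def BraceIdeal.mulCon (I : BraceIdeal B) : Con B where
  toSetoid := I.addCon.toSetoid
  mul' := by
    intro a b c d h h'
    have h1 : a⁻¹ * b ∈ I.carrier := (I.rel_iff _ _).1 h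
    have h2 : c⁻¹ * d ∈ I.carrier := (I.rel_iff _ _).1 h'
    refine (I.rel_iff _ _).2 ?_
    have := I.mul_mem (I.mulConj_mem c⁻¹ h1) h2
    simpa [mul_assoc] using this

/-- The quotient brace. -/
def BraceIdeal.Quo (I : BraceIdeal B) : Type _ := I.addCon.Quotient

/-- The projection. -/
def BraceIdeal.pr (I : BraceIdeal B) (b : B) : I.Quo := (b : I.addCon.Quotient)

instance (I : BraceIdeal B) : AddGroup I.Quo := inferInstanceAs (AddGroup I.addCon.Quotient)
instance (I : BraceIdeal B) : Group I.Quo := inferInstanceAs (Group I.mulCon.Quotient)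

variable (I : BraceIdeal B)
theorem BraceIdeal.pr_surj : Function.Surjective I.pr := Quotient.mk_surjective
theorem BraceIdeal.pr_add (a b : B) : I.pr (a + b) = I.pr a + I.pr b := rfl
theorem BraceIdeal.pr_mul (a b : B) : I.pr (a * b) = I.pr a * I.pr b := rfl
theorem BraceIdeal.pr_neg (a : B) : I.pr (-a) = -I.pr a := rfl
theorem BraceIdeal.pr_inv (a : B) : I.pr (a⁻¹) = (I.pr a)⁻¹ := rfl
theorem BraceIdeal.pr_zero : I.pr 0 = 0 := rfl
theorem BraceIdeal.pr_one : I.pr 1 = 1 := rfl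

instance : SkewBrace I.Quo where
  one_eq_zero := by rw [← I.pr_one, ← I.pr_zero, one_eq_zero]
  skew_distrib := by
    intro a b c
    obtain ⟨a, rfl⟩ := I.pr_surj a
    obtain ⟨b, rfl⟩ := I.pr_surj b
    obtain ⟨c, rfl⟩ := I.pr_surj c
    simp only [← I.pr_add, ← I.pr_mul, ← I.pr_neg, skew_distrib]

theorem BraceIdeal.pr_lam (a b : B) : I.pr (lam a b) = lam (I.pr a) (I.pr b) := rfl

theorem BraceIdeal.pr_eq (a b : B) : I.pr a = I.pr b ↔ -a + b ∈ I.carrier :=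
  AddCon.eq I.addCon

theorem BraceIdeal.pr_eq_zero (a : B) : I.pr a = 0 ↔ a ∈ I.carrier := by
  rw [eq_comm, ← I.pr_zero, I.pr_eq]; simp

/-- additive hom -/
def BraceIdeal.prHom : B →+ I.Quo where
  toFun := I.pr
  map_zero' := rfl
  map_add' := fun _ _ => rfl

/-- comap -/
def BraceIdeal.comap (J : BraceIdeal I.Quo) : BraceIdeal B :=
  mkIdeal (J.addSubgroup.comap I.prHom)
    (fun b {_} ha => J.addConj_mem (I.pr b) ha)
    (fun b {_} ha => J.mulConj_mem (I.pr b) ha)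
    (fun b {_} ha => J.lam_mem (I.pr b) ha)

/-- map -/
def BraceIdeal.map (J : BraceIdeal B) : BraceIdeal I.Quo :=
  mkIdeal (J.addSubgroup.map I.prHom)
    (by
      rintro b _ ⟨a, ha, rfl⟩
      obtain ⟨b, rfl⟩ := I.pr_surj b
      exact ⟨_, J.addConj_mem b ha, rfl⟩)
    (by
      rintro b _ ⟨a, ha, rfl⟩
      obtain ⟨b, rfl⟩ := I.pr_surj b
      exact ⟨_, J.mulConj_mem b ha, rfl⟩)
    (by
      rintro b _ ⟨a, ha, rfl⟩
      obtain ⟨b, rfl⟩ := I.pr_surj b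
      exact ⟨_, J.lam_mem b ha, rfl⟩)

/-- membership in the centre of the brace -/
def IsZ (x : B) : Prop := (∀ y, lam x y = y) ∧ (∀ y, x + y = y + x) ∧ (∀ y, x * y = y * x)

theorem IsZ.lam_right {x : B} (h : IsZ x) (y : B) : lam y x = x := by
  have h1 := h.2.2 y
  rw [mul_eq, mul_eq, h.1, h.2.1] at h1
  exact (add_left_cancel h1).symm

theorem IsZ.mul_eq {x : B} (h : IsZ x) (y : B) : x * y = x + y := by
  rw [SkewBrace.mul_eq, h.1]

theorem isZ_zero : IsZ (0 : B) := by
  refine ⟨fun y => ?_, fun y => ?_, fun y => ?_⟩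
  · rw [← one_eq_zero, lam_one]
  · simp
  · rw [← one_eq_zero]; simp

theorem IsZ.add {x y : B} (hx : IsZ x) (hy : IsZ y) : IsZ (x + y) := by
  rw [← hx.mul_eq]
  refine ⟨fun z => ?_, fun z => ?_, fun z => ?_⟩
  · rw [lam_mul, hy.1, hx.1]
  · rw [hx.mul_eq, add_assoc, hy.2.1, ← add_assoc, hx.2.1, add_assoc]
  · rw [mul_assoc, hy.2.2, ← mul_assoc, hx.2.2, mul_assoc]

theorem IsZ.neg {x : B} (hx : IsZ x) : IsZ (-x) := by
  have h : -x = x⁻¹ := by rw [inv_eq_lam, hx.lam_right]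
  refine ⟨fun z => ?_, fun z => ?_, fun z => ?_⟩
  · rw [h]
    conv_lhs => rw [← hx.1 z, lam_inv_lam]
  · rw [neg_add_eq_iff_eq_add, ← add_assoc, hx.2.1, add_assoc]; simp
  · rw [h, inv_mul_eq_iff_eq_mul, ← mul_assoc, hx.2.2, mul_assoc]; simp

/-- the centre -/
def zetaAdd (B : Type*) [SkewBrace B] : AddSubgroup B where
  carrier := {x | IsZ x}
  zero_mem' := isZ_zero
  add_mem' := IsZ.add
  neg_mem' := IsZ.neg

/-- A subgroup of the centre is an ideal. -/
def centralIdeal (S : AddSubgroup B) (hS : ∀ x ∈ S, IsZ x) : BraceIdeal B :=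
  mkIdeal S
    (by intro b a ha; rwa [← (hS a ha).2.1, add_assoc, add_neg_cancel, add_zero])
    (by intro b a ha; rwa [← (hS a ha).2.2, mul_assoc, mul_inv_cancel, mul_one])
    (by intro b a ha; rwa [(hS a ha).lam_right])

/-- The centre as ideal. -/
def zetaI (B : Type*) [SkewBrace B] : BraceIdeal B := centralIdeal (zetaAdd B) (fun _ h => h)

/-- relative centre -/
def zetaOver : BraceIdeal B := I.comap (zetaI I.Quo)

theorem mem_zetaOver (x : B) : x ∈ (zetaOver I).carrier ↔ IsZ (I.pr x) := Iff.rfl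

theorem memZetaQuot_iff (x : B) : MemZetaQuot I.carrier x ↔ x ∈ (zetaOver I).carrier := by
  rw [mem_zetaOver, IsZ]
  simp only [MemZetaQuot, MemZetaQuotRel, MemSocQuotRel, Set.mem_univ, true_and, forall_const,
    I.pr_surj.forall, ← I.pr_lam, ← I.pr_add, ← I.pr_mul, I.rel_iff, ← and_assoc]
  simp only [← I.rel_iff, ← I.pr_eq]
  simp only [eq_comm]

end basics
end SkewBrace
namespace SkewBrace
section keystep

theorem pow_hom_aux {G : Type*} [Group G] (H : Subgroup G) (hc : H ≤ Subgroup.center G)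
    [H.FiniteIndex] : ∃ m : ℕ, 0 < m ∧ (∀ x : G, x ^ m ∈ H) ∧
      ∀ x y : G, (x * y) ^ m = x ^ m * y ^ m := by
  have : (Subgroup.center G).FiniteIndex := Subgroup.finiteIndex_of_le hc
  have hn : H.Normal := ⟨fun n hn g => by
    have := Subgroup.mem_center_iff.1 (hc hn) g
    rwa [this, mul_assoc, mul_inv_cancel, mul_one]⟩
  refine ⟨(Subgroup.center G).index * H.index,
    Nat.mul_pos (Nat.pos_of_ne_zero Subgroup.FiniteIndex.index_ne_zero)
      (Nat.pos_of_ne_zero Subgroup.FiniteIndex.index_ne_zero), fun x => ?_, fun x y => ?_⟩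
  · rw [pow_mul]; exact H.pow_index_mem _
  · have h := congrArg Subtype.val (map_mul (MonoidHom.transferCenterPow G) x y)
    simp only [MonoidHom.transferCenterPow_apply, Subgroup.coe_mul] at h
    rw [pow_mul, h, pow_mul, pow_mul]
    refine Commute.mul_pow ?_ _
    exact (Subgroup.mem_center_iff.1 ((Subgroup.center G).pow_index_mem y) _)

theorem nsmul_hom_aux {B : Type*} [AddGroup B] (J C : AddSubgroup B)
    (T : Finset B) (hT : ∀ b ∈ J, ∃ t ∈ T, -t + b ∈ C)
    (hc : ∀ c ∈ C, ∀ x : B, c + x = x + c) :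
    ∃ m : ℕ, 0 < m ∧ (∀ x ∈ J, m • x ∈ C) ∧
      ∀ x ∈ J, ∀ y ∈ J, m • (x + y) = m • x + m • y := by
  let C' : AddSubgroup J := C.addSubgroupOf J
  let H : Subgroup (Multiplicative J) := AddSubgroup.toSubgroup C'
  have hle : H ≤ Subgroup.center (Multiplicative J) := by
    intro c hcm
    rw [Subgroup.mem_center_iff]
    intro g
    have hcm' : ((c.toAdd : J) : B) ∈ C := hcm
    apply Multiplicative.toAdd.injective
    apply Subtype.ext
    exact (hc _ hcm' _).symm
  have hfin : Finite (Multiplicative J ⧸ H) := by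
    choose! f hf hf' using hT
    refine Finite.of_injective
      (fun q : Multiplicative J ⧸ H => (⟨f (q.out.toAdd : J), hf _ (q.out.toAdd : J).2⟩ : T)) ?_
    intro p q hpq
    have h1 : f (p.out.toAdd : J) = f (q.out.toAdd : J) := congrArg Subtype.val hpq
    have hp := hf' _ (p.out.toAdd : J).2
    have hq := hf' _ (q.out.toAdd : J).2
    rw [← h1] at hq
    have h2 := C.add_mem (C.neg_mem hp) hq
    rw [← QuotientGroup.out_eq' p, ← QuotientGroup.out_eq' q, QuotientGroup.eq]
    change -((p.out.toAdd : J) : B) + ((q.out.toAdd : J) : B) ∈ C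
    simpa [add_assoc] using h2
  have : H.FiniteIndex := Subgroup.finiteIndex_of_finite_quotient
  obtain ⟨m, hm, h1, h2⟩ := pow_hom_aux H hle
  refine ⟨m, hm, fun x hx => ?_, fun x hx y hy => ?_⟩
  · exact h1 (Multiplicative.ofAdd ⟨x, hx⟩)
  · exact congrArg (fun z : Multiplicative J => ((z.toAdd : J) : B))
      (h2 (Multiplicative.ofAdd ⟨x, hx⟩) (Multiplicative.ofAdd ⟨y, hy⟩))

theorem nsmul_conj {B : Type*} [AddGroup B] (m : ℕ) (b a : B) :
    m • (b + a + -b) = b + m • a + -b := by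
  induction m with
  | zero => simp
  | succ k ih => rw [succ_nsmul, ih, succ_nsmul]; simp [add_assoc]

variable {B : Type*} [SkewBrace B]

theorem key (hno : ∀ I : BraceIdeal B, I.carrier.Finite → ∀ x ∈ I.carrier, x = 0)
    (J : BraceIdeal B) (hJ : ∀ x, IsZ x → x ∈ J.carrier) (T : Finset B)
    (hT : ∀ b ∈ J.carrier, ∃ t ∈ T, IsZ (-t + b)) : ∀ x ∈ J.carrier, IsZ x := by
  obtain ⟨m, hm, hmZ, hadd⟩ := nsmul_hom_aux J.addSubgroup (zetaAdd B) T hT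
    (fun c hc x => hc.2.1 x)
  replace hmZ : ∀ x ∈ J.carrier, IsZ (m • x) := hmZ
  replace hadd : ∀ x ∈ J.carrier, ∀ y ∈ J.carrier, m • (x + y) = m • x + m • y := hadd
  have htf : ∀ c : B, IsZ c → ∀ k : ℕ, 0 < k → k • c = 0 → c = 0 := by
    intro c hc k hk hkc
    refine hno (centralIdeal (AddSubgroup.zmultiples c) ?_) ?_ c
      (AddSubgroup.mem_zmultiples c)
    · intro x hx
      exact (AddSubgroup.zmultiples_le (H := zetaAdd B)).2 hc hx
    · have : IsOfFinAddOrder c := isOfFinAddOrder_iff_nsmul_eq_zero.2 ⟨k, hk, hkc⟩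
      exact finite_zmultiples.2 this
  have hmul : ∀ x ∈ J.carrier, ∀ y ∈ J.carrier, m • (x * y) = m • x + m • y := by
    intro x hx y hy
    rw [mul_eq, hadd x hx _ (J.lam_mem x hy), ← lam_nsmul, (hmZ y hy).lam_right]
  have hpowJ : ∀ x ∈ J.carrier, ∀ k : ℕ, x ^ k ∈ J.carrier := fun x hx k =>
    J.subgroup.pow_mem hx k
  have hpow : ∀ x ∈ J.carrier, ∀ k : ℕ, m • (x ^ k) = k • (m • x) := by
    intro x hx k
    induction k with
    | zero => simp [one_eq_zero]
    | succ k ih => rw [pow_succ, hmul _ (hpowJ x hx k) _ hx, ih, succ_nsmul]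
  let S : AddSubgroup B :=
    { carrier := {x | x ∈ J.carrier ∧ m • x = 0}
      zero_mem' := ⟨J.zero_mem, by simp⟩
      add_mem' := fun {a b} ha hb => ⟨J.add_mem ha.1 hb.1, by
        rw [hadd _ ha.1 _ hb.1, ha.2, hb.2, add_zero]⟩
      neg_mem' := fun {a} ha => ⟨J.neg_mem ha.1, by rw [neg_nsmul, ha.2, neg_zero]⟩ }
  have hSfin : (S : Set B).Finite := by
    choose! f hf hf' using hT
    refine Set.Finite.of_finite_image (f := f) (T.finite_toSet.subset ?_) ?_
    · rintro _ ⟨x, hx, rfl⟩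
      exact hf x hx.1
    · intro x hx y hy hxy
      have hp := hf' x hx.1
      have hq := hf' y hy.1
      rw [← hxy] at hq
      have h2 := hp.neg.add hq
      have h3 : IsZ (-x + y) := by simpa [add_assoc] using h2
      have h4 := htf _ h3 m hm (S.add_mem (S.neg_mem hx) hy).2
      exact (neg_add_eq_zero.1 h4)
  have hS0 := hno (mkIdeal S
    (fun b {a} ha => ⟨J.addConj_mem b ha.1, by rw [nsmul_conj, ha.2]; simp⟩)
    (fun b {a} ha => by
      have hbJ := J.mulConj_mem b ha.1
      refine ⟨hbJ, ?_⟩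
      have hfo : IsOfFinOrder a := by
        rw [← finite_powers]
        refine hSfin.subset ?_
        rintro _ ⟨k, rfl⟩
        exact ⟨hpowJ a ha.1 k, by simp only [hpow a ha.1, ha.2, nsmul_zero]⟩
      obtain ⟨N, hN, hN1⟩ := isOfFinOrder_iff_pow_eq_one.1 hfo
      refine htf _ (hmZ _ hbJ) N hN ?_
      rw [← hpow _ hbJ, conj_pow, hN1, mul_one, mul_inv_cancel, one_eq_zero, nsmul_zero])
    (fun b {a} ha => ⟨J.lam_mem b ha.1, by rw [← lam_nsmul, ha.2, lam_z]⟩)) hSfin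
  have hinj : ∀ x ∈ J.carrier, ∀ y ∈ J.carrier, m • x = m • y → x = y := by
    intro x hx y hy h
    refine neg_add_eq_zero.1 (hS0 _ ⟨J.add_mem (J.neg_mem hx) hy, ?_⟩)
    rw [hadd _ (J.neg_mem hx) _ hy, neg_nsmul, h, neg_add_cancel]
  intro x hx
  have hxm : x ^ m = m • x := hinj _ (hpowJ x hx m) _ (hJ _ (hmZ x hx)) (hpow x hx m)
  have hlam : ∀ b, lam b x = x := fun b =>
    hinj _ (J.lam_mem b hx) _ hx (by rw [← lam_nsmul, (hmZ x hx).lam_right])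
  have hac : ∀ b, x + b = b + x := fun b => by
    have h := hinj _ (J.addConj_mem b hx) _ hx
      (by rw [nsmul_conj, ← (hmZ x hx).2.1 b]; simp)
    exact (add_neg_eq_iff_eq_add.1 h).symm
  have hmc : ∀ b, x * b = b * x := fun b => by
    have hbJ := J.mulConj_mem b hx
    have h : b * x * b⁻¹ = x := by
      refine hinj _ hbJ _ hx (hinj _ (hJ _ (hmZ _ hbJ)) _ (hJ _ (hmZ _ hx)) ?_)
      rw [← hpow _ hbJ, conj_pow, hxm, ← (hmZ x hx).2.2 b]
      simp
    exact (mul_inv_eq_iff_eq_mul.1 h).symm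
  refine ⟨fun b => ?_, hac, hmc⟩
  have h := hmc b
  rw [mul_eq, mul_eq, hlam, ← hac] at h
  exact add_left_cancel h

end keystep

section noeth
variable {B : Type*} [SkewBrace B]

theorem fg_step (I J : BraceIdeal B) (x : B) 
    (h : ∀ y ∈ J.carrier, ∃ n : ℤ, -(n • x) + y ∈ I.carrier)
    (hI : ∀ H : AddSubgroup B, (∀ y ∈ H, y ∈ I.carrier) → H.FG)
    (H : AddSubgroup B) (hH : ∀ y ∈ H, y ∈ J.carrier) : H.FG := by
  let D : AddSubgroup ℤ :=
    ((H.map I.prHom).comap I.prHom).comap (zmultiplesHom B x)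
  obtain ⟨d, hd⟩ := Int.subgroup_cyclic D
  have hdD : d ∈ D := by rw [hd]; exact AddSubgroup.subset_closure rfl
  obtain ⟨g, hgH, hg⟩ := hdD
  have hg' : I.pr g = d • I.pr x := hg.trans (map_zsmul I.prHom d x)
  have : H = AddSubgroup.closure {g} ⊔ (H ⊓ I.addSubgroup) := by
    apply le_antisymm
    · intro y hy
      obtain ⟨n, hn⟩ := h y (hH y hy)
      rw [← I.pr_eq] at hn
      have hn' : I.pr y = n • I.pr x := hn.symm.trans (map_zsmul I.prHom n x)
      have hnD : n ∈ D := ⟨y, hy, hn.symm⟩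
      rw [hd, AddSubgroup.mem_closure_singleton] at hnD
      obtain ⟨k, rfl⟩ := hnD
      have hk : -(k • g) + y ∈ I.carrier := by
        rw [← I.pr_eq, hn', smul_assoc, ← hg']
        exact map_zsmul I.prHom k g
      have hy2 : y = k • g + (-(k • g) + y) := by simp
      rw [hy2]
      refine AddSubgroup.add_mem_sup ?_ ⟨H.add_mem (H.neg_mem (H.zsmul_mem hgH k)) hy, hk⟩
      exact AddSubgroup.mem_closure_singleton.2 ⟨k, rfl⟩
    · refine sup_le ?_ inf_le_left
      rw [AddSubgroup.closure_le]; simpa using hgH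
  rw [this]
  refine AddSubgroup.FG.sup ⟨{g}, by simp⟩ (hI _ (fun y hy => hy.2))

theorem all_fg (hB : IsSupersoluble B) (H : AddSubgroup B) : H.FG := by
  obtain ⟨n, I, h0, hn, -, hstep⟩ := hB
  have : ∀ i, i ≤ n → ∀ H : AddSubgroup B, (∀ y ∈ H, y ∈ (I i).carrier) → H.FG := by
    intro i
    induction i with
    | zero =>
      intro _ H hH
      have : H = ⊥ := by
        rw [eq_bot_iff]
        intro y hy
        have := hH y hy
        rw [h0] at this
        exact this
      rw [this]
      exact ⟨∅, by simp⟩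
    | succ i ih =>
      intro hi
      have h : ∃ x, ∀ y ∈ (I (i+1)).carrier, ∃ n : ℤ, -(n • x) + y ∈ (I i).carrier := by
        rcases hstep i hi with ⟨⟨x, _, hx, _⟩, _⟩ | ⟨p, _, x, _, _, _, hx⟩
        · exact ⟨x, hx⟩
        · exact ⟨x, hx⟩
      obtain ⟨x, hx⟩ := h
      exact fg_step (I i) (I (i + 1)) x hx (ih (by omega))
  exact this n le_rfl H (fun y _ => by rw [hn]; trivial)

theorem acc (hB : IsSupersoluble B) : WellFoundedGT (AddSubgroup B) := by
  rw [wellFoundedGT_iff_monotone_chain_condition]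
  intro a
  obtain ⟨S, hS⟩ := all_fg hB (iSup a)
  have hmem : ∀ s ∈ S, ∃ k, s ∈ a k := by
    intro s hs
    have : s ∈ iSup a := by rw [← hS]; exact AddSubgroup.subset_closure hs
    exact (AddSubgroup.mem_iSup_of_directed (a.monotone.directed_le)).1 this
  choose! f hf using hmem
  refine ⟨S.sup f, fun m hm => le_antisymm (a.monotone hm) ?_⟩
  refine (le_iSup a m).trans ?_
  rw [← hS, AddSubgroup.closure_le]
  intro s hs
  exact a.monotone (Finset.le_sup hs) (hf s hs)

/-- `Z` is isolated: no proper finite ideal extensions. -/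
def Isol (Z : BraceIdeal B) : Prop :=
  ∀ J : BraceIdeal B, Z.carrier ⊆ J.carrier →
    (∃ T : Finset B, ∀ b ∈ J.carrier, ∃ t ∈ T, -t + b ∈ Z.carrier) → J.carrier ⊆ Z.carrier

theorem exists_isol (hB : IsSupersoluble B) : ∃ F : BraceIdeal B, F.carrier.Finite ∧ Isol F := by
  have := acc hB
  obtain ⟨_, ⟨F, hF, rfl⟩, hmin⟩ := (wellFounded_gt (α := AddSubgroup B)).has_min
    {H | ∃ I : BraceIdeal B, I.carrier.Finite ∧ I.addSubgroup = H}
    ⟨_, centralIdeal (⊥ : AddSubgroup B) (by rintro x hx; rw [AddSubgroup.mem_bot.1 hx]; exact isZ_zero),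
      Set.finite_singleton _, rfl⟩
  refine ⟨F, hF, fun J hFJ ⟨T, hT⟩ => ?_⟩
  have hJ : J.carrier.Finite := by
    refine (Set.Finite.image2 (fun t f => t + f) T.finite_toSet hF).subset ?_
    intro b hb
    obtain ⟨t, ht, htb⟩ := hT b hb
    exact ⟨t, ht, _, htb, by simp⟩
  have h1 := hmin _ ⟨J, hJ, rfl⟩
  have h2 : F.addSubgroup ≤ J.addSubgroup := hFJ
  rw [lt_iff_le_not_ge] at h1
  push Not at h1
  exact h1 h2

theorem Isol.step {Z : BraceIdeal B} (hZ : Isol Z) : Isol (zetaOver Z) := by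
  classical
  intro J hJ ⟨T, hT⟩ x hx
  rw [mem_zetaOver]
  refine key ?_ (Z.map J) ?_ (T.image Z.pr) ?_ (Z.pr x) ⟨x, hx, rfl⟩
  · intro I hI y hy
    obtain ⟨y, rfl⟩ := Z.pr_surj y
    rw [Z.pr_eq_zero]
    refine hZ (Z.comap I) ?_ ⟨hI.toFinset.image (Function.surjInv Z.pr_surj), ?_⟩ hy
    · intro z hz
      change Z.pr z ∈ I.carrier
      rw [(Z.pr_eq_zero z).2 hz]
      exact I.zero_mem
    · intro b hb
      refine ⟨_, Finset.mem_image_of_mem _ (hI.mem_toFinset.2 (show Z.pr b ∈ I.carrier from hb)), ?_⟩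
      exact (Z.pr_eq _ _).1 (Function.surjInv_eq Z.pr_surj _)
  · intro y hy
    obtain ⟨y, rfl⟩ := Z.pr_surj y
    exact ⟨y, hJ hy, rfl⟩
  · rintro _ ⟨b, hb, rfl⟩
    obtain ⟨t, ht, h⟩ := hT b hb
    exact ⟨_, Finset.mem_image_of_mem _ ht, h⟩

/-- the relative upper central series -/
def zs (F : BraceIdeal B) : ℕ → BraceIdeal B
  | 0 => F
  | n + 1 => zetaOver (zs F n)

theorem zs_isol {F : BraceIdeal B} (hF : Isol F) : ∀ n, Isol (zs F n)
  | 0 => hF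
  | n + 1 => (zs_isol hF n).step

theorem zeta_sub (F : BraceIdeal B) : ∀ n, zetaChain B n ⊆ (zs F n).carrier
  | 0 => by
    rintro x rfl
    exact F.zero_mem
  | n + 1 => by
    have ih := zeta_sub F n
    intro x hx
    refine (memZetaQuot_iff _ x).1 ?_
    exact ⟨⟨trivial, fun y hy => ih (hx.1.2.1 y hy), fun y hy => ih (hx.1.2.2 y hy)⟩,
      fun y hy => ih (hx.2 y hy)⟩

theorem gamma_sub (F : BraceIdeal B) (n : ℕ) (hn : ∀ x, x ∈ (zs F n).carrier) :
    ∀ i k, i + k = n → gammaChain B i ⊆ (zs F k).carrier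
  | 0, k => by
    intro h x _
    obtain rfl : k = n := by omega
    exact hn x
  | i + 1, k => by
    intro h
    have ih := gamma_sub F n hn i (k + 1) (by omega)
    change AddSubgroup.closure _ ≤ (zs F k).addSubgroup
    rw [AddSubgroup.closure_le]
    have hz : ∀ x ∈ gammaChain B i, IsZ ((zs F k).pr x) := fun x hx => ih hx
    rintro z (⟨x, hx, b, rfl⟩ | ⟨b, x, hx, rfl⟩ | ⟨x, hx, b, rfl⟩)
    · refine ((zs F k).pr_eq_zero _).1 ?_
      rw [starOp, BraceIdeal.pr_add, BraceIdeal.pr_lam, (hz x hx).1, BraceIdeal.pr_neg,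
        add_neg_cancel]
    · refine ((zs F k).pr_eq_zero _).1 ?_
      rw [starOp, BraceIdeal.pr_add, BraceIdeal.pr_lam, (hz x hx).lam_right, BraceIdeal.pr_neg,
        add_neg_cancel]
    · refine ((zs F k).pr_eq_zero _).1 ?_
      rw [addCommutator, add_assoc, BraceIdeal.pr_add, BraceIdeal.pr_add _ x b, (hz x hx).2.1,
        ← BraceIdeal.pr_add, ← BraceIdeal.pr_add]
      simp [add_assoc, BraceIdeal.pr_zero]

end noeth

/-- Let `B` be a supersoluble brace such that `B/ζ_n(B)` is finite (there are
finitely many cosets of `ζ_n(B)`). Then `Γ_{n+1}(B)` is finite. -/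
theorem gamma_finite_of_zeta_finite_index (B : Type*) [SkewBrace B]
    (hB : IsSupersoluble B) (n : ℕ)
    (hfin : ∃ T : Finset B, ∀ b : B, ∃ t ∈ T, -t + b ∈ zetaChain B n) :
    (gammaChain B n).Finite := by
  obtain ⟨F, hF, hiso⟩ := exists_isol hB
  obtain ⟨T, hT⟩ := hfin
  have hall : ∀ x, x ∈ (zs F n).carrier := by
    intro x
    refine zs_isol hiso n (mkIdeal ⊤ (fun _ {_} _ => trivial) (fun _ {_} _ => trivial)
      (fun _ {_} _ => trivial)) (fun _ _ => trivial) ⟨T, fun b _ => ?_⟩ (Set.mem_univ x)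
    obtain ⟨t, ht, h⟩ := hT b
    exact ⟨t, ht, zeta_sub F n h⟩
  exact hF.subset (gamma_sub F n hall n 0 (by omega))

end SkewBrace
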